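/- Let k ∈ σ ⊆ {1,...,n}. With sgn(j,σ) = (-1)^{i-1} where j is the i-th smallest element of σ, and p(σ) = ∏_{i∈σ} (-1)^{i-1}, one has sgn(k,σ) · p(σ∖{k}) = sgn(k, ({1,...,n}∖σ) ∪ {k}) · p(σ). -/

import Mathlib

/-!
Counting the elements below `k` turns a disjoint union into a product of signs, so the signs of `k`
in `σ` and in its complement multiply to its sign `(-1) ^ (k - 1)` in `{1, …, n}`, which is exactly
the factor that `k` contributes to `p σ`. The claim follows because signs square to one.
-/

open Finset

/-- `sgn j σ = (-1)^(i-1)` where `j` is the `i`-th smallest element of `σ`;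
equivalently, `(-1)` raised to the number of elements of `σ` smaller than `j`. -/
def sgn (j : ℕ) (σ : Finset ℕ) : ℤ := (-1) ^ (σ.filter (fun x => x < j)).card

/-- `p σ = ∏_{i ∈ σ} (-1)^(i-1)`. -/
def p (σ : Finset ℕ) : ℤ := ∏ i ∈ σ, (-1 : ℤ) ^ (i - 1)

theorem sgn_mul_self (j : ℕ) (σ : Finset ℕ) : sgn j σ * sgn j σ = 1 :=
  pow_mul_pow_eq_one _ (by norm_num)

theorem sgn_insert_of_le {i j : ℕ} (hij : j ≤ i) (σ : Finset ℕ) :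
    sgn j (insert i σ) = sgn j σ := by
  rw [sgn, sgn, filter_insert, if_neg hij.not_gt]

theorem sgn_union {σ τ : Finset ℕ} (hστ : Disjoint σ τ) (j : ℕ) :
    sgn j (σ ∪ τ) = sgn j σ * sgn j τ := by
  rw [sgn, filter_union, card_union_of_disjoint (disjoint_filter_filter hστ), pow_add, sgn, sgn]

theorem sgn_mul_sgn_sdiff {σ τ : Finset ℕ} (hστ : σ ⊆ τ) (j : ℕ) :
    sgn j σ * sgn j (τ \ σ) = sgn j τ := by
  rw [← sgn_union disjoint_sdiff, union_sdiff_of_subset hστ]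

theorem sgn_Icc_one {j n : ℕ} (hj : j ≤ n + 1) : sgn j (Icc 1 n) = (-1) ^ (j - 1) := by
  have filter_eq : (Icc 1 n).filter (fun x => x < j) = Ico 1 j := by
    ext x
    simp only [mem_filter, mem_Icc, mem_Ico]
    omega
  rw [sgn, filter_eq, Nat.card_Ico]

theorem neg_one_pow_mul_p_erase {k : ℕ} {σ : Finset ℕ} (hk : k ∈ σ) :
    (-1) ^ (k - 1) * p (σ.erase k) = p σ :=
  mul_prod_erase σ (fun i => (-1 : ℤ) ^ (i - 1)) hk

/-- Lemma 2.1 of the paper: for `k ∈ σ ⊆ {1,…,n}`,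
`sgn(k,σ) · p(σ∖{k}) = sgn(k, ({1,…,n}∖σ) ∪ {k}) · p(σ)`. -/
theorem sgn_p_identity (n k : ℕ) (σ : Finset ℕ)
    (hσ : σ ⊆ Finset.Icc 1 n) (hk : k ∈ σ) :
    sgn k σ * p (σ.erase k) = sgn k (insert k (Finset.Icc 1 n \ σ)) * p σ := by
  have hkn : k ≤ n + 1 := (mem_Icc.mp (hσ hk)).2.trans n.le_succ
  set τ := Icc 1 n \ σ
  have sgn_mul_sgn_compl : sgn k σ * sgn k τ = (-1) ^ (k - 1) := by
    rw [sgn_mul_sgn_sdiff hσ, sgn_Icc_one hkn]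
  calc sgn k σ * p (σ.erase k)
      = sgn k τ * sgn k τ * (sgn k σ * p (σ.erase k)) := by rw [sgn_mul_self, one_mul]
    _ = sgn k τ * (sgn k σ * sgn k τ * p (σ.erase k)) := by ring
    _ = sgn k τ * p σ := by rw [sgn_mul_sgn_compl, neg_one_pow_mul_p_erase hk]
    _ = sgn k (insert k τ) * p σ := by rw [sgn_insert_of_le le_rfl]
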